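/- Every interval matrix is totally unimodular: if X ∈ {0,1}^{m×n} is an interval matrix, then every square submatrix of X (obtained by selecting any set of rows and an equally sized set of columns) has determinant equal to −1, 0, or 1. -/

import Mathlib

noncomputable section

/-- A 0–1 matrix is an interval matrix if each column's set of rows with entry 1 is a
block of consecutive indices: entries are 0 or 1, and the support of each column is
order-convex. -/
def IsIntervalMatrix {m n : ℕ} (X : Matrix (Fin m) (Fin n) ℤ) : Prop :=
  (∀ i j, X i j = 0 ∨ X i j = 1) ∧
  ∀ j i₁ i₂ i₃, i₁ ≤ i₂ → i₂ ≤ i₃ → X i₁ j = 1 → X i₃ j = 1 → X i₂ j = 1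

/-!
Sort the chosen rows, so that the columns of the square submatrix are indicators of order-convex
sets of row indices. The order-convex sets that contain the first row are initial segments, hence
form a chain under inclusion. Subtracting the column of the smallest one from the columns of the
others leaves differences of initial segments, which are again order-convex, and a single `1` in
the first row. Expanding along that row gives, up to sign, a smaller determinant of the same kind.
-/

open Matrix

section OrderConvex

variable {α ι : Type*}

theorem isLowerSet_of_ordConnected_of_bot_mem [Preorder α] [OrderBot α] {s : Set α}
    (hs : s.OrdConnected) (hbot : ⊥ ∈ s) : IsLowerSet s :=
  fun _ _ hle hmem => hs.out hbot hmem ⟨bot_le, hle⟩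

theorem ordConnected_diff_of_isLowerSet [Preorder α] {s t : Set α}
    (hs : IsLowerSet s) (ht : IsLowerSet t) : (s \ t).OrdConnected :=
  hs.ordConnected.inter ht.compl.ordConnected

theorem exists_least_of_isLowerSet [LinearOrder α] {S : ι → Set α} {J : Set ι} (hfin : J.Finite)
    (hne : J.Nonempty) (hS : ∀ j ∈ J, IsLowerSet (S j)) : ∃ j₀ ∈ J, ∀ j ∈ J, S j₀ ⊆ S j := by
  obtain ⟨j₀, hj₀, hmin⟩ := hfin.exists_minimalFor S J hne
  exact ⟨j₀, hj₀, fun j hj => ((hS j₀ hj₀).total (hS j hj)).elim id (hmin hj)⟩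

open Classical in
/-- The family obtained from `S` by removing `S j₀` from every other member that contains `a`.
When `a ∈ S j₀` this is Gaussian elimination, read on supports: it clears row `a` with pivot
column `j₀`. -/
def eliminate (S : ι → Set α) (a : α) (j₀ : ι) (j : ι) : Set α :=
  if j ≠ j₀ ∧ a ∈ S j then S j \ S j₀ else S j

theorem mem_eliminate_iff {S : ι → Set α} {a : α} {j₀ : ι} (ha : a ∈ S j₀) (j : ι) :
    a ∈ eliminate S a j₀ j ↔ j = j₀ := by
  unfold eliminate
  split_ifs with h
  · simp [ha, h.1]
  · grind

theorem ordConnected_eliminate_bot [Preorder α] [OrderBot α] {S : ι → Set α}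
    (hS : ∀ j, (S j).OrdConnected) {j₀ : ι} (hj₀ : ⊥ ∈ S j₀) (j : ι) :
    (eliminate S ⊥ j₀ j).OrdConnected := by
  unfold eliminate
  split_ifs with h
  · exact ordConnected_diff_of_isLowerSet
      (isLowerSet_of_ordConnected_of_bot_mem (hS j) h.2)
      (isLowerSet_of_ordConnected_of_bot_mem (hS j₀) hj₀)
  · exact hS j

end OrderConvex

section TotallyUnimodular

variable {R : Type*} [CommRing R]

theorem neg_mem_range_signType_cast {x : R} (hx : x ∈ Set.range (SignType.cast : SignType → R)) :
    -x ∈ Set.range (SignType.cast : SignType → R) := by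
  obtain ⟨s, rfl⟩ := hx
  exact ⟨-s, SignType.coe_neg s⟩

theorem det_eq_of_row_eq_single {k : ℕ} {A : Matrix (Fin (k + 1)) (Fin (k + 1)) R}
    {i j : Fin (k + 1)} (hA : A i = Pi.single j 1) :
    A.det = (-1) ^ (i + j : ℕ) * (A.submatrix i.succAbove j.succAbove).det := by
  rw [det_succ_row A i, Fintype.sum_eq_single j fun j' hj' => by simp [hA, hj']]
  simp [hA]

theorem isTotallyUnimodular_of_strictMono {m n : Type*} [LinearOrder m] {A : Matrix m n R}
    (hA : ∀ (k : ℕ) (f : Fin k → m) (g : Fin k → n), StrictMono f → Function.Injective g →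
      (A.submatrix f g).det ∈ Set.range (SignType.cast : SignType → R)) :
    A.IsTotallyUnimodular := by
  intro k f g hf hg
  let σ := Tuple.sort f
  have sorted_det := hA k (f ∘ σ) g
    ((Tuple.monotone_sort f).strictMono_of_injective (hf.comp σ.injective)) hg
  have det_eq : (A.submatrix (f ∘ σ) g).det = Equiv.Perm.sign σ * (A.submatrix f g).det :=
    det_permute σ (A.submatrix f g)
  rcases Int.units_eq_one_or (Equiv.Perm.sign σ) with hσ | hσ
  · simpa [det_eq, hσ] using sorted_det
  · simpa [det_eq, hσ] using neg_mem_range_signType_cast sorted_det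

end TotallyUnimodular

section IndicatorMatrix

variable {α ι R : Type*}

/-- The 0–1 matrix whose column `j` is the indicator function of `S j`, that is, the incidence
matrix of points against the sets of the family `S`. -/
def indicatorMatrix (R : Type*) [Zero R] [One R] (S : ι → Set α) : Matrix α ι R :=
  Matrix.of fun i j => (S j).indicator 1 i

theorem indicatorMatrix_submatrix [Zero R] [One R] {β κ : Type*} (S : ι → Set α) (f : β → α)
    (g : κ → ι) :
    (indicatorMatrix R S).submatrix f g = indicatorMatrix R fun j => f ⁻¹' S (g j) :=
  rfl

theorem eq_indicatorMatrix [Zero R] [One R] {A : Matrix α ι R}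
    (hA : ∀ i j, A i j = 0 ∨ A i j = 1) : A = indicatorMatrix R fun j => {i | A i j = 1} := by
  classical
  ext i j
  by_cases h : A i j = 1
  · simp [indicatorMatrix, h]
  · simpa [indicatorMatrix, Set.indicator_apply, h] using (hA i j).resolve_right h

theorem indicatorMatrix_eliminate_row [DecidableEq ι] [Zero R] [One R] {S : ι → Set α} {a : α}
    {j₀ : ι} (ha : a ∈ S j₀) :
    indicatorMatrix R (eliminate S a j₀) a = Pi.single j₀ 1 := by
  classical
  ext j
  simp [indicatorMatrix, Set.indicator_apply, mem_eliminate_iff ha, Pi.single_apply]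

variable [CommRing R]

theorem det_indicatorMatrix_eliminate [Fintype ι] [DecidableEq ι] {S : ι → Set ι} {a j₀ : ι}
    (hj₀ : ∀ j, a ∈ S j → S j₀ ⊆ S j) :
    (indicatorMatrix R (eliminate S a j₀)).det = (indicatorMatrix R S).det := by
  classical
  rw [← det_transpose, ← det_transpose (indicatorMatrix R S)]
  refine det_eq_of_forall_row_eq_smul_add_const
    (fun j => if j ≠ j₀ ∧ a ∈ S j then -1 else 0) j₀ (by simp) fun j i => ?_
  by_cases h : j ≠ j₀ ∧ a ∈ S j
  · simp [indicatorMatrix, eliminate, h, Set.indicator_sdiff (hj₀ j h.2), sub_eq_add_neg]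
  · simp [indicatorMatrix, eliminate, h]

theorem det_indicatorMatrix_mem_range_signType_cast {k : ℕ} {S : Fin k → Set (Fin k)}
    (hS : ∀ j, (S j).OrdConnected) :
    (indicatorMatrix R S).det ∈ Set.range (SignType.cast : SignType → R) := by
  induction k with
  | zero => exact ⟨1, by simp⟩
  | succ k ih =>
    rcases {j | ⊥ ∈ S j}.eq_empty_or_nonempty with hempty | hne
    · have first_row_zero (j) : indicatorMatrix R S ⊥ j = 0 :=
        Set.indicator_of_notMem (s := S j) (Set.eq_empty_iff_forall_notMem.mp hempty j) _
      exact ⟨0, by simp [det_eq_zero_of_row_eq_zero ⊥ first_row_zero]⟩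
    · obtain ⟨j₀, hj₀ : ⊥ ∈ S j₀, hleast⟩ := exists_least_of_isLowerSet (Set.toFinite _) hne
        fun j hj => isLowerSet_of_ordConnected_of_bot_mem (hS j) hj
      have minor_det := ih (S := fun j => Fin.succAbove ⊥ ⁻¹' eliminate S ⊥ j₀ (j₀.succAbove j))
        fun j => (ordConnected_eliminate_bot hS hj₀ _).preimage_mono
          (Fin.strictMono_succAbove ⊥).monotone
      rw [← det_indicatorMatrix_eliminate (S := S) hleast,
        det_eq_of_row_eq_single (indicatorMatrix_eliminate_row hj₀), indicatorMatrix_submatrix]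
      rcases neg_one_pow_eq_or R ((⊥ : Fin (k + 1)) + j₀ : ℕ) with hsign | hsign
      · simpa only [hsign, one_mul] using minor_det
      · simpa only [hsign, neg_one_mul] using neg_mem_range_signType_cast minor_det

theorem intervalMatrix_totallyUnimodular_general [LinearOrder α] {A : Matrix α ι R}
    (hA : ∀ i j, A i j = 0 ∨ A i j = 1) (hconvex : ∀ j, {i | A i j = 1}.OrdConnected) :
    A.IsTotallyUnimodular := by
  rw [eq_indicatorMatrix hA]
  refine isTotallyUnimodular_of_strictMono fun k f g hf _ => ?_
  rw [indicatorMatrix_submatrix]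
  exact det_indicatorMatrix_mem_range_signType_cast fun j =>
    (hconvex (g j)).preimage_mono hf.monotone

end IndicatorMatrix

theorem IsIntervalMatrix.ordConnected_column {m n : ℕ} {X : Matrix (Fin m) (Fin n) ℤ}
    (hX : IsIntervalMatrix X) (j : Fin n) : {i | X i j = 1}.OrdConnected :=
  ⟨fun i₁ h₁ i₃ h₃ i₂ h₂ => hX.2 j i₁ i₂ i₃ h₂.1 h₂.2 h₁ h₃⟩

/-- Every interval matrix is totally unimodular: each square submatrix, obtained by
selecting a set of rows and an equally sized set of columns (given by injective index
maps), has determinant −1, 0, or 1. -/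
theorem intervalMatrix_totallyUnimodular {m n : ℕ}
    (X : Matrix (Fin m) (Fin n) ℤ) (hX : IsIntervalMatrix X) :
    ∀ (k : ℕ) (f : Fin k → Fin m) (g : Fin k → Fin n),
      Function.Injective f → Function.Injective g →
      (X.submatrix f g).det = -1 ∨ (X.submatrix f g).det = 0 ∨
        (X.submatrix f g).det = 1 := by
  intro k f g hf hg
  simpa [SignType.range_eq, or_left_comm] using
    intervalMatrix_totallyUnimodular_general hX.1 hX.ordConnected_column k f g hf hg
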